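/- arXiv:1106.3653 — 2 statements merged into one kernel-verified Lean document; each statement's English description precedes it below -/
import Mathlib

section
/- The patterns 45321 and 34521 are even-Wilf-equivalent: for all n ≥ 0, eav_n(45321) = eav_n(34521). -/
/-!
The pattern `34521` is an increasing triple followed by a descent lying to the right of and below it;
`45321` is a triple of shape `231` followed by such a descent. Call a cell (column, value) *good* for
`π` if `π` has a descent pair strictly to the right of and below it. Good cells are closed under
moving left and up, so column by column they are the cells above a monotone height function `ht π`.
An occurrence of `34521` is then a *rise*, `a < b < c` with `π a < π b < π c` and `(c, π a)` good, and
an occurrence of `45321` is a *turn*, `π c < π a < π b` with `(c, π c)` good.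

Composing with a 3-cycle of columns turns a rise at columns `(a, b, c)` into a turn at the same
columns. This preserves the sign, because a 3-cycle is even, and it preserves the good cells
(`ht_congr`). All column triples are listed in colexicographic order, and `Stage n m` is the set of
even permutations whose turns all come among the first `m` keys and whose rises all come afterwards.
`Stage n 0` consists of the even permutations avoiding `45321`, and the last stage of those avoiding
`34521`. Passing from one stage to the next changes only the permutations with a rise at the single
triple with key `m`, and replaces that rise by a turn. The lemmas `fwd_rise`, `fwd_turn`, `bwd_turn`
and `bwd_rise` show that this replacement and its inverse respect the stages, so consecutive stages
have equal size (`ncard_stage_succ`). The replacement is that of Backelin, West and Xin for the shape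
equivalence of `321` and `213`.
-/

/-- A permutation `π` contains the pattern `σ` if some subsequence of `π`
(given by a strictly increasing choice of indices) is order-isomorphic to `σ`. -/
def Pattern.Contains {k n : ℕ} (σ : Equiv.Perm (Fin k)) (π : Equiv.Perm (Fin n)) : Prop :=
  ∃ f : Fin k → Fin n, StrictMono f ∧ ∀ a b : Fin k, π (f a) < π (f b) ↔ σ a < σ b

/-- `π` avoids the pattern `σ`. -/
def Pattern.Avoids {k n : ℕ} (σ : Equiv.Perm (Fin k)) (π : Equiv.Perm (Fin n)) : Prop :=
  ¬ Pattern.Contains σ π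

/-- `eav n σ`: the number of even permutations of length `n` avoiding `σ`. -/
noncomputable def eav (n : ℕ) {k : ℕ} (σ : Equiv.Perm (Fin k)) : ℕ :=
  Nat.card {π : Equiv.Perm (Fin n) // Equiv.Perm.sign π = 1 ∧ Pattern.Avoids σ π}

/-- Even-Wilf-equivalence: the same number of even avoiders of every length. -/
def EvenWilfEquiv {k l : ℕ} (σ : Equiv.Perm (Fin k)) (τ : Equiv.Perm (Fin l)) : Prop :=
  ∀ n : ℕ, eav n σ = eav n τ

/-- The pattern `45321` (one-line notation, 1-indexed). -/
def p45321 : Equiv.Perm (Fin 5) :=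
  ⟨![3,4,2,1,0], ![4,3,2,0,1], by decide, by decide⟩

/-- The pattern `34521` (one-line notation, 1-indexed). -/
def p34521 : Equiv.Perm (Fin 5) :=
  ⟨![2,3,4,1,0], ![4,3,0,1,2], by decide, by decide⟩

namespace EvenWilf

/-! ### Rises and turns above a height function -/

/-- Colexicographic comparison of column triples: `(c, b, a)` precedes `(k, j, i)`. -/
def Before (a b c i j k : ℕ) : Prop := c < k ∨ c = k ∧ (b < j ∨ b = j ∧ a < i)

/-- Columns `a < b < c` carry increasing values, and the cell `(c, p a)` lies above the height `h`. -/
def Rise {n : ℕ} (h p : Fin n → ℕ) (a b c : Fin n) : Prop :=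
  a < b ∧ b < c ∧ p a < p b ∧ p b < p c ∧ h c ≤ p a

/-- Columns `a < b < c` carry values in the order `231`, and `(c, p c)` lies above the height `h`. -/
def Turn {n : ℕ} (h p : Fin n → ℕ) (a b c : Fin n) : Prop :=
  a < b ∧ b < c ∧ p c < p a ∧ p a < p b ∧ h c ≤ p c

variable {n : ℕ} {p q h : Fin n → ℕ} {i j k : Fin n}

/-- How a column `t` is affected when the values at columns `i`, `j`, `k` become `x`, `y`, `z`. -/
lemma moved_cases (hp : Function.Injective p) {x y z : ℕ} (qi : q i = x) (qj : q j = y)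
    (qk : q k = z) (qo : ∀ t, t ≠ i → t ≠ j → t ≠ k → q t = p t) (t : Fin n) :
    (t = i ∧ q t = x ∧ p t = p i ∧ h t = h i) ∨ (t = j ∧ q t = y ∧ p t = p j ∧ h t = h j) ∨
      (t = k ∧ q t = z ∧ p t = p k ∧ h t = h k) ∨
      (t ≠ i ∧ t ≠ j ∧ t ≠ k ∧ q t = p t ∧ p t ≠ p i ∧ p t ≠ p j ∧ p t ≠ p k) := by
  by_cases ti : t = i
  · subst ti; simp [qi]
  by_cases tj : t = j
  · subst tj; simp [qj]
  by_cases tk : t = k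
  · subst tk; simp [qk]
  exact Or.inr (Or.inr (Or.inr ⟨ti, tj, tk, qo t ti tj tk, hp.ne ti, hp.ne tj, hp.ne tk⟩))

/-! ### Moving one triple

In each lemma `q` arises from `p` by permuting the values in columns `i`, `j`, `k`. A rise or turn of
`q` on the wrong side of `(i, j, k)` is traced back to one of `p`: among the at most five columns
involved there is a triple contradicting the minimality or maximality assumed for `p`. Each of the three columns is one of `i`,
`j`, `k` or untouched; one such triple settles most of the resulting cases, and the few others need a
further comparison to select it. -/

/-- Turning the colexicographically first rise leaves only later rises. -/
lemma fwd_rise (hp : Function.Injective p) (hm : Monotone h)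
    (hijk : Rise h p i j k) (qi : q i = p j) (qj : q j = p k) (qk : q k = p i)
    (qo : ∀ t, t ≠ i → t ≠ j → t ≠ k → q t = p t)
    (HP : ∀ a b c, ¬ (Rise h p a b c ∧ Before a b c i j k))
    (a b c : Fin n) : ¬ (Rise h q a b c ∧ ¬ Before i j k a b c) := by
  have qa := moved_cases (h := h) hp qi qj qk qo a
  have qb := moved_cases (h := h) hp qi qj qk qo b
  have qc := moved_cases (h := h) hp qi qj qk qo c
  simp only [Rise, Before] at *
  intro hc
  have hck : h c ≤ h k := hm (by omega)
  have hcj : j ≤ c → h j ≤ h c := @hm j c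
  have hjk : h j ≤ h k := hm (by omega)
  have hij : h i ≤ h j := hm (by omega)
  clear qi qj qk qo hm hp
  rcases qa with qa | qa | qa | qa <;> rcases qb with qb | qb | qb | qb <;>
    rcases qc with qc | qc | qc | qc
  all_goals first
    | omega
    | exact HP a b j (by omega)
    | exact HP a b c (by omega)
    | exact HP a j k (by omega)
    | exact HP i j c (by omega)
    | exact HP a i j (by omega)
    | exact HP i b k (by omega)
    | exact HP a b k (by omega)
    | exact HP a b i (by omega)
    | exact HP b j k (by omega)
    | skip
  · by_cases s : p a < p i
    · exact HP a i j (by omega)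
    · exact HP a j k (by omega)
  · by_cases s : p a < p i
    · exact HP a b c (by omega)
    · exact HP a j k (by omega)
  · by_cases s : p b < p i
    · exact HP a b i (by omega)
    · exact HP b j k (by omega)
  · by_cases s : p b < p j
    · exact HP a b j (by omega)
    by_cases t : p i < p a
    · exact HP a b k (by omega)
    by_cases u : a < i
    · exact HP a i j (by omega)
    · exact HP i b k (by omega)

set_option maxHeartbeats 1000000 in
/-- Turning the first rise, when every turn comes before it, creates no turn after it. -/
lemma fwd_turn (hp : Function.Injective p) (hm : Monotone h)
    (hijk : Rise h p i j k) (qi : q i = p j) (qj : q j = p k) (qk : q k = p i)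
    (qo : ∀ t, t ≠ i → t ≠ j → t ≠ k → q t = p t)
    (HP : ∀ a b c, ¬ (Rise h p a b c ∧ Before a b c i j k))
    (HQ : ∀ a b c, ¬ (Turn h p a b c ∧ ¬ Before a b c i j k))
    (a b c : Fin n) : ¬ (Turn h q a b c ∧ Before i j k a b c) := by
  have qa := moved_cases (h := h) hp qi qj qk qo a
  have qb := moved_cases (h := h) hp qi qj qk qo b
  have qc := moved_cases (h := h) hp qi qj qk qo c
  simp only [Rise, Turn, Before] at *
  intro hc
  have hbk : b ≤ k → h b ≤ h k := @hm b k
  have hjk : h j ≤ h k := hm (by omega)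
  have hij : h i ≤ h j := hm (by omega)
  clear qi qj qk qo hm hp
  rcases qa with qa | qa | qa | qa <;> rcases qb with qb | qb | qb | qb <;>
    rcases qc with qc | qc | qc | qc
  all_goals first
    | omega
    | exact HQ i j c (by omega)
    | exact HQ a b c (by omega)
    | exact HQ a j c (by omega)
    | exact HQ a k c (by omega)
    | exact HQ j k c (by omega)
    | exact HQ j b c (by omega)
    | exact HQ k b c (by omega)
    | exact HP i b k (by omega)
    | exact HP i j b (by omega)
    | exact HP a j k (by omega)
    | exact HP i a b (by omega)
    | exact HP i a k (by omega)
    | skip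
  · by_cases s : b < k
    · exact HP i j b (by omega)
    · exact HQ k b c (by omega)
  · by_cases s : p j < p b
    · exact HP i j b (by omega)
    by_cases t : a < i
    · exact HP a j k (by omega)
    · exact HP i a b (by omega)

/-- Straightening the last turn leaves only earlier turns. -/
lemma bwd_turn (hp : Function.Injective p) (hm : Monotone h)
    (hijk : Turn h p i j k) (qi : q i = p k) (qj : q j = p i) (qk : q k = p j)
    (qo : ∀ t, t ≠ i → t ≠ j → t ≠ k → q t = p t)
    (HQ : ∀ a b c, ¬ (Turn h p a b c ∧ Before i j k a b c))
    (a b c : Fin n) : ¬ (Turn h q a b c ∧ ¬ Before a b c i j k) := by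
  have qa := moved_cases (h := h) hp qi qj qk qo a
  have qb := moved_cases (h := h) hp qi qj qk qo b
  have qc := moved_cases (h := h) hp qi qj qk qo c
  simp only [Turn, Before] at *
  intro hc
  have hjk : h j ≤ h k := hm (by omega)
  have hij : h i ≤ h j := hm (by omega)
  clear qi qj qk qo hm hp
  rcases qa with qa | qa | qa | qa <;> rcases qb with qb | qb | qb | qb <;>
    rcases qc with qc | qc | qc | qc
  all_goals first
    | omega
    | exact HQ a b k (by omega)
    | exact HQ i j c (by omega)
    | exact HQ a b c (by omega)
    | exact HQ j b c (by omega)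
    | exact HQ a j c (by omega)
    | exact HQ i a k (by omega)
    | skip
  by_cases s : p c < p i
  · exact HQ i j c (by omega)
  by_cases t : a < j
  · exact HQ a j c (by omega)
  · exact HQ i a k (by omega)

/-- Straightening the last turn, when every rise comes after it, creates no rise before it. -/
lemma bwd_rise (hp : Function.Injective p) (hm : Monotone h)
    (hijk : Turn h p i j k) (qi : q i = p k) (qj : q j = p i) (qk : q k = p j)
    (qo : ∀ t, t ≠ i → t ≠ j → t ≠ k → q t = p t)
    (HP : ∀ a b c, ¬ (Rise h p a b c ∧ ¬ Before i j k a b c))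
    (HQ : ∀ a b c, ¬ (Turn h p a b c ∧ Before i j k a b c))
    (a b c : Fin n) : ¬ (Rise h q a b c ∧ Before a b c i j k) := by
  have qa := moved_cases (h := h) hp qi qj qk qo a
  have qb := moved_cases (h := h) hp qi qj qk qo b
  have qc := moved_cases (h := h) hp qi qj qk qo c
  simp only [Rise, Turn, Before] at *
  intro hc
  have hck : h c ≤ h k := hm (by omega)
  have hcj : j ≤ c → h j ≤ h c := @hm j c
  have hjk : h j ≤ h k := hm (by omega)
  have hij : h i ≤ h j := hm (by omega)
  clear qi qj qk qo hm hp
  rcases qa with qa | qa | qa | qa <;> rcases qb with qb | qb | qb | qb <;>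
    rcases qc with qc | qc | qc | qc
  all_goals first
    | omega
    | exact HP a i j (by omega)
    | exact HP i b j (by omega)
    | exact HQ b j k (by omega)
    | exact HP a b j (by omega)
    | exact HP a b i (by omega)
    | exact HP a b c (by omega)
    | exact HQ i c k (by omega)
    | exact HP a i c (by omega)
    | exact HQ c j k (by omega)
    | exact HP i b c (by omega)
    | exact HQ i b k (by omega)
    | exact HQ b c k (by omega)
    | skip
  · by_cases s : b < j
    · by_cases t : p b < p j
      · exact HQ b j k (by omega)
      · exact HP i b c (by omega)
    · by_cases t : p i < p b
      · exact HQ i b k (by omega)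
      · exact HQ b c k (by omega)
  · by_cases s : p i < p c
    · exact HP a i c (by omega)
    by_cases t : c < j
    · exact HQ c j k (by omega)
    · exact HP a i j (by omega)

/-! ### Numbering the column triples -/

lemma digit_lt {n x y a i : ℕ} (ha : a < n) (hi : i < n) :
    x * n + a < y * n + i ↔ x < y ∨ x = y ∧ a < i := by
  rcases lt_trichotomy x y with h | h | h
  · have : (x + 1) * n ≤ y * n := Nat.mul_le_mul_right _ h
    rw [Nat.succ_mul] at this
    omega
  · subst h; omega
  · have : (y + 1) * n ≤ x * n := Nat.mul_le_mul_right _ h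
    rw [Nat.succ_mul] at this
    omega

/-- The rank of `(c, b, a)`, read as the digits of a number in base `n`. -/
def key (a b c : Fin n) : ℕ := (c * n + b) * n + a

lemma key_lt_key (a b c i j k : Fin n) : key a b c < key i j k ↔ Before a b c i j k := by
  unfold key Before
  rw [digit_lt a.2 i.2, digit_lt b.2 j.2]
  have h1 := digit_lt (x := c) (y := k) b.2 j.2
  have h2 := digit_lt (x := k) (y := c) j.2 b.2
  omega

lemma key_inj {a b c i j k : Fin n} (h : key a b c = key i j k) : a = i ∧ b = j ∧ c = k := by
  have h1 := key_lt_key a b c i j k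
  have h2 := key_lt_key i j k a b c
  simp only [Before] at h1 h2
  omega

lemma key_lt (a b c : Fin n) : key a b c < n * n * n := by
  unfold key
  have h1 : (c : ℕ) * n + b < n * n := by
    have : ((c : ℕ) + 1) * n ≤ n * n := Nat.mul_le_mul_right _ c.2
    rw [Nat.succ_mul] at this
    omega
  have : ((c : ℕ) * n + b + 1) * n ≤ n * n * n := Nat.mul_le_mul_right _ h1
  rw [Nat.succ_mul] at this
  omega

/-! ### Good cells -/

open Equiv

/-- The cell in column `c` at height `v` has a descent pair of `π` strictly to its right and below. -/
def Good (π : Perm (Fin n)) (c : Fin n) (v : ℕ) : Prop :=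
  ∃ d e, c < d ∧ d < e ∧ π e < π d ∧ (π d : ℕ) < v

/-- The least height at which the cell in column `c` is good, capped at `n` so that it also makes sense
for columns without good cells. -/
noncomputable def ht (π : Perm (Fin n)) (c : Fin n) : ℕ := sInf {v | v = n ∨ Good π c v}

lemma ht_le {π : Perm (Fin n)} {c : Fin n} {v : ℕ} (hv : v < n) : ht π c ≤ v ↔ Good π c v := by
  constructor
  · intro h
    rcases Nat.sInf_mem (s := {v | v = n ∨ Good π c v}) ⟨n, Or.inl rfl⟩ with h' | h'
    · exact absurd (h'.symm.trans_le h) (by omega)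
    · obtain ⟨d, e, h1, h2, h3, h4⟩ := h'
      exact ⟨d, e, h1, h2, h3, h4.trans_le h⟩
  · exact fun h => Nat.sInf_le (Or.inr h)

lemma ht_mono (π : Perm (Fin n)) : Monotone (ht π) := by
  intro c c' hc
  refine Nat.sInf_le ?_
  rcases Nat.sInf_mem (s := {v | v = n ∨ Good π c' v}) ⟨n, Or.inl rfl⟩ with h' | h'
  · exact Or.inl h'
  · obtain ⟨d, e, h1, h2, h3, h4⟩ := h'
    exact Or.inr ⟨d, e, hc.trans_lt h1, h2, h3, h4⟩

/-- If `(k, x)` is good, then rearranging columns `i < j < k` holding values at least `x` keeps every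
good cell good: a descent pair using one of these columns can be replaced by the pair for `(k, x)`,
which lies entirely to the right of `k`. -/
lemma good_of_good {π σ : Perm (Fin n)} {x : ℕ} (hij : i < j) (hjk : j < k)
    (hσ : ∀ t, t ≠ i → t ≠ j → t ≠ k → σ t = π t)
    (xi : x ≤ π i) (xj : x ≤ π j) (xk : x ≤ π k) (hx : Good π k x) {c : Fin n} {v : ℕ}
    (h : Good π c v) : Good σ c v := by
  obtain ⟨d, e, h1, h2, h3, h4⟩ := hx
  obtain ⟨d', e', h1', h2', h3', h4'⟩ := h
  have aux (t : Fin n) (h : t = i ∨ t = j ∨ t = k) (hc : c < t) (hv : (π t : ℕ) < v) :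
      Good σ c v := by
    have hd := hσ d (by omega) (by omega) (by omega)
    have he := hσ e (by omega) (by omega) (by omega)
    refine ⟨d, e, ?_, h2, by rwa [hd, he], ?_⟩
    · rcases h with rfl | rfl | rfl <;> omega
    · rw [hd]
      rcases h with rfl | rfl | rfl <;> omega
  by_cases hd : d' = i ∨ d' = j ∨ d' = k
  · exact aux d' hd h1' h4'
  by_cases he : e' = i ∨ e' = j ∨ e' = k
  · exact aux e' he (h1'.trans h2') (by omega)
  push Not at hd he
  have hd := hσ d' hd.1 hd.2.1 hd.2.2
  have he := hσ e' he.1 he.2.1 he.2.2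
  exact ⟨d', e', h1', h2', by rwa [hd, he], by rwa [hd]⟩

lemma ht_congr {π σ : Perm (Fin n)} {x : Fin n} (hij : i < j) (hjk : j < k)
    (hσ : ∀ t, t ≠ i → t ≠ j → t ≠ k → σ t = π t)
    (xπ : x ≤ π i ∧ x ≤ π j ∧ x ≤ π k) (xσ : x ≤ σ i ∧ x ≤ σ j ∧ x ≤ σ k)
    (hx : ht π k ≤ x) : ht σ = ht π := by
  have h1 : Good π k x := (ht_le x.2).1 hx
  have h2 : Good σ k x := good_of_good hij hjk hσ xπ.1 xπ.2.1 xπ.2.2 h1 h1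
  have : Good σ = Good π := by
    funext c v
    exact propext ⟨good_of_good hij hjk (fun t hi hj hk => (hσ t hi hj hk).symm)
      xσ.1 xσ.2.1 xσ.2.2 h2, good_of_good hij hjk hσ xπ.1 xπ.2.1 xπ.2.2 h1⟩
  unfold ht
  rw [this]

/-! ### Pattern occurrences as rises and turns -/

/-- The first three columns of an occurrence of `34521` in `π`. -/
def IsRise (π : Perm (Fin n)) (a b c : Fin n) : Prop := Rise (ht π) (fun t => (π t : ℕ)) a b c

/-- The first three columns of an occurrence of `45321` in `π`. -/
def IsTurn (π : Perm (Fin n)) (a b c : Fin n) : Prop := Turn (ht π) (fun t => (π t : ℕ)) a b c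

lemma contains_iff_exists_isRise (π : Perm (Fin n)) :
    Pattern.Contains p34521 π ↔ ∃ a b c, IsRise π a b c := by
  constructor
  · rintro ⟨f, hf, h⟩
    refine ⟨f 0, f 1, f 2, hf (by decide), hf (by decide), (h 0 1).2 (by decide),
      (h 1 2).2 (by decide), (ht_le (π (f 0)).2).2 ⟨f 3, f 4, hf (by decide), hf (by decide),
      (h 4 3).2 (by decide), (h 3 0).2 (by decide)⟩⟩
  · rintro ⟨a, b, c, h1, h2, h3, h4, h5⟩
    beta_reduce at h3 h4 h5
    obtain ⟨d, e, h6, h7, h8, h9⟩ := (ht_le (π a).2).1 h5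
    have h9 : π d < π a := h9
    refine ⟨![a, b, c, d, e], ?_, ?_⟩
    · rw [Fin.strictMono_iff_lt_succ]
      intro t
      fin_cases t <;> assumption
    · intro s t
      fin_cases s <;> fin_cases t <;> simp [p34521] <;> omega

lemma contains_iff_exists_isTurn (π : Perm (Fin n)) :
    Pattern.Contains p45321 π ↔ ∃ a b c, IsTurn π a b c := by
  constructor
  · rintro ⟨f, hf, h⟩
    refine ⟨f 0, f 1, f 2, hf (by decide), hf (by decide), (h 2 0).2 (by decide),
      (h 0 1).2 (by decide), (ht_le (π (f 2)).2).2 ⟨f 3, f 4, hf (by decide), hf (by decide),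
      (h 4 3).2 (by decide), (h 3 2).2 (by decide)⟩⟩
  · rintro ⟨a, b, c, h1, h2, h3, h4, h5⟩
    beta_reduce at h3 h4 h5
    obtain ⟨d, e, h6, h7, h8, h9⟩ := (ht_le (π c).2).1 h5
    have h9 : π d < π c := h9
    refine ⟨![a, b, c, d, e], ?_, ?_⟩
    · rw [Fin.strictMono_iff_lt_succ]
      intro t
      fin_cases t <;> assumption
    · intro s t
      fin_cases s <;> fin_cases t <;> simp [p45321] <;> omega

/-! ### The stages -/

/-- The 3-cycle `i ↦ j ↦ k ↦ i` of columns, for distinct `i`, `j`, `k`. -/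
def rot (i j k : Fin n) : Perm (Fin n) := swap i j * swap j k

lemma rot_apply (hij : i < j) (hjk : j < k) :
    rot i j k i = j ∧ rot i j k j = k ∧ rot i j k k = i ∧
      ∀ t, t ≠ i → t ≠ j → t ≠ k → rot i j k t = t := by
  have h1 := hij.ne
  have h2 := hjk.ne
  have h3 := (hij.trans hjk).ne
  refine ⟨?_, ?_, ?_, fun t hi hj hk => ?_⟩ <;>
    simp [rot, swap_apply_def, *, Ne.symm h2, Ne.symm h3]

lemma rot_inv_apply (hij : i < j) (hjk : j < k) :
    (rot i j k)⁻¹ i = k ∧ (rot i j k)⁻¹ j = i ∧ (rot i j k)⁻¹ k = j ∧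
      ∀ t, t ≠ i → t ≠ j → t ≠ k → (rot i j k)⁻¹ t = t := by
  obtain ⟨h1, h2, h3, h4⟩ := rot_apply hij hjk
  simp only [Perm.inv_eq_iff_eq]
  exact ⟨h3.symm, h1.symm, h2.symm, fun t hi hj hk => (h4 t hi hj hk).symm⟩

lemma sign_rot (hij : i < j) (hjk : j < k) : Perm.sign (rot i j k) = 1 := by
  simp [rot, Perm.sign_swap hij.ne, Perm.sign_swap hjk.ne]

/-- The even permutations all of whose turns have key less than `m` and all of whose rises have key at
least `m`. -/
def Stage (n m : ℕ) : Set (Perm (Fin n)) :=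
  {π | Perm.sign π = 1 ∧ (∀ a b c, IsRise π a b c → m ≤ key a b c) ∧
    ∀ a b c, IsTurn π a b c → key a b c < m}

lemma val_injective (π : Perm (Fin n)) : Function.Injective fun t => (π t : ℕ) :=
  Fin.val_injective.comp π.injective

/-- A rise at the threshold triple can be turned, moving to the next stage. -/
lemma mul_rot_mem {π : Perm (Fin n)} (hπ : π ∈ Stage n (key i j k)) (h : IsRise π i j k) :
    IsTurn (π * rot i j k) i j k ∧ π * rot i j k ∈ Stage n (key i j k + 1) := by
  obtain ⟨hs, hP, hQ⟩ := hπ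
  obtain ⟨hij, hjk, h1, h2, h3⟩ := id h
  beta_reduce at h1 h2 h3
  obtain ⟨ri, rj, rk, ro⟩ := rot_apply hij hjk
  have hh : ht (π * rot i j k) = ht π := by
    refine ht_congr (x := π i) hij hjk (fun t a b c => ?_) ?_ ?_ h3
    · simp [ro t a b c]
    · simp only [Fin.le_def]; omega
    · simp only [Perm.mul_apply, ri, rj, rk, Fin.le_def]; omega
  have qi : ((π * rot i j k) i : ℕ) = π j := by simp [ri]
  have qj : ((π * rot i j k) j : ℕ) = π k := by simp [rj]
  have qk : ((π * rot i j k) k : ℕ) = π i := by simp [rk]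
  have qo : ∀ t, t ≠ i → t ≠ j → t ≠ k → ((π * rot i j k) t : ℕ) = π t :=
    fun t a b c => by simp [ro t a b c]
  have HP : ∀ a b c, ¬ (IsRise π a b c ∧ Before a b c i j k) := fun a b c hr =>
    absurd ((key_lt_key a b c i j k).2 hr.2) (hP a b c hr.1).not_gt
  have HQ : ∀ a b c, ¬ (IsTurn π a b c ∧ ¬ Before a b c i j k) := fun a b c hr =>
    hr.2 ((key_lt_key a b c i j k).1 (hQ a b c hr.1))
  refine ⟨?_, ?_, ?_, ?_⟩
  · refine ⟨hij, hjk, ?_, ?_, ?_⟩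
    · simpa only [qi, qk] using h1
    · simpa only [qi, qj] using h2
    · simpa only [hh, qk] using h3
  · rw [map_mul, hs, sign_rot hij hjk, mul_one]
  · intro a b c hr
    rw [IsRise, hh] at hr
    by_contra hk
    refine fwd_rise (val_injective π) (ht_mono π) h qi qj qk qo HP a b c ⟨hr, ?_⟩
    rw [← key_lt_key]; omega
  · intro a b c hr
    rw [IsTurn, hh] at hr
    by_contra hk
    refine fwd_turn (val_injective π) (ht_mono π) h qi qj qk qo HP HQ a b c ⟨hr, ?_⟩
    rw [← key_lt_key]; omega

/-- A turn at the last triple of a stage can be straightened, moving to the previous stage. -/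
lemma mul_rot_inv_mem {π : Perm (Fin n)} (hπ : π ∈ Stage n (key i j k + 1))
    (h : IsTurn π i j k) :
    IsRise (π * (rot i j k)⁻¹) i j k ∧ π * (rot i j k)⁻¹ ∈ Stage n (key i j k) := by
  obtain ⟨hs, hP, hQ⟩ := hπ
  obtain ⟨hij, hjk, h1, h2, h3⟩ := id h
  beta_reduce at h1 h2 h3
  obtain ⟨ri, rj, rk, ro⟩ := rot_inv_apply hij hjk
  have hh : ht (π * (rot i j k)⁻¹) = ht π := by
    refine ht_congr (x := π k) hij hjk (fun t a b c => ?_) ?_ ?_ h3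
    · rw [Perm.mul_apply, ro t a b c]
    · simp only [Fin.le_def]; omega
    · simp only [Perm.mul_apply, ri, rj, rk, Fin.le_def]; omega
  have qi : ((π * (rot i j k)⁻¹) i : ℕ) = π k := by rw [Perm.mul_apply, ri]
  have qj : ((π * (rot i j k)⁻¹) j : ℕ) = π i := by rw [Perm.mul_apply, rj]
  have qk : ((π * (rot i j k)⁻¹) k : ℕ) = π j := by rw [Perm.mul_apply, rk]
  have qo : ∀ t, t ≠ i → t ≠ j → t ≠ k → ((π * (rot i j k)⁻¹) t : ℕ) = π t :=
    fun t a b c => by rw [Perm.mul_apply, ro t a b c]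
  have HP : ∀ a b c, ¬ (IsRise π a b c ∧ ¬ Before i j k a b c) := fun a b c hr =>
    hr.2 ((key_lt_key i j k a b c).1 (hP a b c hr.1))
  have HQ : ∀ a b c, ¬ (IsTurn π a b c ∧ Before i j k a b c) := fun a b c hr =>
    absurd ((key_lt_key i j k a b c).2 hr.2) (Nat.lt_succ_iff.1 (hQ a b c hr.1)).not_gt
  refine ⟨?_, ?_, ?_, ?_⟩
  · refine ⟨hij, hjk, ?_, ?_, ?_⟩
    · simpa only [qi, qj] using h1
    · simpa only [qj, qk] using h2
    · simpa only [hh, qi] using h3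
  · rw [map_mul, map_inv, hs, sign_rot hij hjk, inv_one, mul_one]
  · intro a b c hr
    rw [IsRise, hh] at hr
    by_contra hk
    refine bwd_rise (val_injective π) (ht_mono π) h qi qj qk qo HP HQ a b c ⟨hr, ?_⟩
    rw [← key_lt_key]; omega
  · intro a b c hr
    rw [IsTurn, hh] at hr
    by_contra hk
    refine bwd_turn (val_injective π) (ht_mono π) h qi qj qk qo HQ a b c ⟨hr, ?_⟩
    rw [← key_lt_key]; omega

lemma mem_succ {π : Perm (Fin n)} {m : ℕ} (hπ : π ∈ Stage n m)
    (h : ∀ a b c, key a b c = m → ¬ IsRise π a b c) : π ∈ Stage n (m + 1) :=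
  ⟨hπ.1, fun a b c hr => Nat.lt_of_le_of_ne (hπ.2.1 a b c hr) fun e => h a b c e.symm hr,
    fun a b c hr => (hπ.2.2 a b c hr).trans m.lt_succ_self⟩

lemma mem_of_succ {π : Perm (Fin n)} {m : ℕ} (hπ : π ∈ Stage n (m + 1))
    (h : ∀ a b c, key a b c = m → ¬ IsTurn π a b c) : π ∈ Stage n m :=
  ⟨hπ.1, fun a b c hr => (Nat.le_succ m).trans (hπ.2.1 a b c hr),
    fun a b c hr => Nat.lt_of_le_of_ne (Nat.lt_succ_iff.1 (hπ.2.2 a b c hr))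
      fun e => h a b c e hr⟩

lemma ncard_stage_succ (n m : ℕ) : (Stage n m).ncard = (Stage n (m + 1)).ncard := by
  classical
  by_cases hm : ∃ i j k : Fin n, key i j k = m
  · obtain ⟨i, j, k, rfl⟩ := hm
    have inj {a b c : Fin n} {R : Fin n → Fin n → Fin n → Prop} (h : ¬ R i j k)
        (e : key a b c = key i j k) : ¬ R a b c := by
      obtain ⟨rfl, rfl, rfl⟩ := key_inj e
      exact h
    refine Set.BijOn.ncard_eq (f := fun π => if IsRise π i j k then π * rot i j k else π)
      (Set.InvOn.bijOn (f' := fun π => if IsTurn π i j k then π * (rot i j k)⁻¹ else π)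
        ⟨?_, ?_⟩ ?_ ?_)
    · intro π hπ
      by_cases h : IsRise π i j k
      · simp [h, (mul_rot_mem hπ h).1]
      · have h' : ¬ IsTurn π i j k := fun t => (hπ.2.2 _ _ _ t).false
        simp [h, h']
    · intro π hπ
      by_cases h : IsTurn π i j k
      · simp [h, (mul_rot_inv_mem hπ h).1]
      · have h' : ¬ IsRise π i j k := fun t => (Nat.lt_of_succ_le (hπ.2.1 _ _ _ t)).false
        simp [h, h']
    · intro π hπ
      by_cases h : IsRise π i j k
      · simpa [h] using (mul_rot_mem hπ h).2
      · simpa [h] using mem_succ hπ fun a b c => inj h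
    · intro π hπ
      by_cases h : IsTurn π i j k
      · simpa [h] using (mul_rot_inv_mem hπ h).2
      · simpa [h] using mem_of_succ hπ fun a b c => inj h
  · push Not at hm
    congr 1
    ext π
    exact ⟨fun h => mem_succ h fun a b c e => absurd e (hm a b c),
      fun h => mem_of_succ h fun a b c e => absurd e (hm a b c)⟩

lemma eav_eq (n : ℕ) : eav n p45321 = eav n p34521 := by
  have h0 : eav n p45321 = (Stage n 0).ncard := by
    rw [eav, ← Nat.card_coe_set_eq]
    refine Nat.card_congr (Equiv.subtypeEquivRight fun π => ?_)
    simp [Stage, Pattern.Avoids, contains_iff_exists_isTurn]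
  have h1 : eav n p34521 = (Stage n (n * n * n)).ncard := by
    rw [eav, ← Nat.card_coe_set_eq]
    refine Nat.card_congr (Equiv.subtypeEquivRight fun π => ?_)
    simp [Stage, Pattern.Avoids, contains_iff_exists_isRise, key_lt, (key_lt _ _ _).not_ge]
  rw [h0, h1]
  induction n * n * n with
  | zero => rfl
  | succ m ih => rw [ih, ncard_stage_succ]

end EvenWilf

/-- The patterns 45321, 34521 are pairwise even-Wilf-equivalent. -/
theorem stmt18 :
    (∀ n : ℕ, eav n p45321 = eav n p34521) := by
  exact EvenWilf.eav_eq
end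

section
/- The patterns 1234 and 4321 are not even-Wilf-equivalent: eav_6(1234) = 258 while eav_6(4321) = 255. -/
/-- The pattern `1234` (the identity in S_4). -/
def p1234 : Equiv.Perm (Fin 4) :=
  ⟨![0,1,2,3], ![0,1,2,3], by decide, by decide⟩

/-- The pattern `4321` (the decreasing permutation in S_4). -/
def p4321 : Equiv.Perm (Fin 4) :=
  ⟨![3,2,1,0], ![3,2,1,0], by decide, by decide⟩

/-- The one-line words (with letters `0, …, n - 1`) of the permutations of length `n`, each paired
with `true` if the permutation is even and `false` if it is odd. The step from `n` to `n + 1`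
mirrors `Equiv.Perm.decomposeFin`: shift all letters up, prepend `0`, and swap the letters `0` and
`p`. -/
def signedWords : ℕ → List (Bool × List ℕ)
  | 0 => [(true, [])]
  | n + 1 => (List.range (n + 1)).flatMap fun p =>
      (signedWords n).map fun q =>
        (if p = 0 then q.1 else !q.1, p :: q.2.map fun x => if x + 1 = p then 0 else x + 1)

/-- `hasInc k b l` tests whether `l` has a strictly increasing subsequence of length `k` all of whose
entries are at least `b`. -/
def hasInc : ℕ → ℕ → List ℕ → Bool
  | 0, _, _ => true
  | _ + 1, _, [] => false
  | k + 1, b, x :: l => (decide (b ≤ x) && hasInc k (x + 1) l) || hasInc (k + 1) b l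

theorem hasInc_iff (l : List ℕ) : ∀ k b : ℕ, hasInc k b l = true ↔
    ∃ s : List ℕ, s.Sublist l ∧ s.length = k ∧ s.Pairwise (· < ·) ∧ ∀ x ∈ s, b ≤ x := by
  induction l with
  | nil =>
    intro k b
    cases k with
    | zero => simp [hasInc]
    | succ k =>
      simp only [hasInc, List.sublist_nil]
      constructor
      · simp
      · rintro ⟨s, rfl, h, _⟩
        simp at h
  | cons y l ih =>
    intro k b
    cases k with
    | zero =>
      simp only [hasInc, true_iff]
      exact ⟨[], by simp⟩
    | succ k =>
      simp only [hasInc, Bool.or_eq_true, Bool.and_eq_true, decide_eq_true_eq, ih]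
      constructor
      · rintro (⟨hb, s, hs, hl, hp, hm⟩ | ⟨s, hs, hl, hp, hm⟩)
        · refine ⟨y :: s, hs.cons_cons y, by simp [hl], ?_, ?_⟩
          · exact List.pairwise_cons.2 ⟨fun x hx => hm x hx, hp⟩
          · intro x hx
            rcases List.mem_cons.1 hx with rfl | hx
            · exact hb
            · have := hm x hx
              omega
        · exact ⟨s, hs.cons y, hl, hp, hm⟩
      · rintro ⟨s, hs, hl, hp, hm⟩
        rcases List.sublist_cons_iff.1 hs with hs | ⟨r, rfl, hr⟩
        · exact Or.inr ⟨s, hs, hl, hp, hm⟩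
        · rw [List.pairwise_cons] at hp
          exact Or.inl ⟨hm y (by simp), r, hr, by simpa using hl, hp.2, fun x hx => hp.1 x hx⟩

theorem contains_iff {n : ℕ} (π : Equiv.Perm (Fin n)) :
    Pattern.Contains p1234 π ↔ hasInc 4 0 (List.ofFn fun i => (π i : ℕ)) = true := by
  have hp : ∀ a, p1234 a = a := by decide
  rw [hasInc_iff]
  constructor
  · rintro ⟨f, hf, h⟩
    refine ⟨List.ofFn fun a => (π (f a) : ℕ), ?_, by simp, ?_, by simp⟩
    · rw [List.sublist_iff_exists_fin_orderEmbedding_get_eq]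
      refine ⟨OrderEmbedding.ofStrictMono
        (fun a => Fin.cast (by simp) (f (Fin.cast (by simp) a))) ?_, ?_⟩
      · intro a b hab
        exact hf (show Fin.cast _ a < Fin.cast _ b from hab)
      · intro a
        simp only [List.get_eq_getElem, List.getElem_ofFn]
        rfl
    · rw [List.pairwise_ofFn]
      intro a b hab
      exact (h a b).2 (by rwa [hp, hp])
  · rintro ⟨s, hs, hl, hinc, -⟩
    rw [List.sublist_iff_exists_fin_orderEmbedding_get_eq] at hs
    obtain ⟨f, hf⟩ := hs
    have hlen : (List.ofFn fun i => (π i : ℕ)).length = n := by simp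
    have key : StrictMono fun a : Fin 4 => π (Fin.cast hlen (f (Fin.cast hl.symm a))) := by
      intro a b hab
      have h1 := List.pairwise_iff_get.1 hinc (Fin.cast hl.symm a) (Fin.cast hl.symm b) hab
      rw [hf, hf] at h1
      simp only [List.get_eq_getElem, List.getElem_ofFn, Fin.val_fin_lt] at h1
      exact h1
    refine ⟨fun a => Fin.cast hlen (f (Fin.cast hl.symm a)), ?_, ?_⟩
    · intro a b hab
      exact f.strictMono (show Fin.cast hl.symm a < Fin.cast hl.symm b from hab)
    · intro a b
      rw [hp, hp]
      exact key.lt_iff_lt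

/-- `signedWords n` lists every permutation of length `n` exactly once, with its parity. -/
theorem sum_perm_eq (n : ℕ) : ∀ F : Bool → List ℕ → ℕ,
    ∑ π : Equiv.Perm (Fin n), F (decide (Equiv.Perm.sign π = 1)) (List.ofFn fun i => (π i : ℕ)) =
      ((signedWords n).map fun q => F q.1 q.2).sum := by
  induction n with
  | zero => intro F; simp [signedWords]
  | succ n ih =>
    intro F
    rw [← Equiv.Perm.decomposeFin.symm.sum_comp, Fintype.sum_prod_type]
    have step : ∀ p : Fin (n + 1), ∑ e : Equiv.Perm (Fin n),
        F (decide (Equiv.Perm.sign (Equiv.Perm.decomposeFin.symm (p, e)) = 1))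
          (List.ofFn fun i => (Equiv.Perm.decomposeFin.symm (p, e) i : ℕ)) =
        ((signedWords n).map fun q => F (if (p : ℕ) = 0 then q.1 else !q.1)
          ((p : ℕ) :: q.2.map fun x => if x + 1 = (p : ℕ) then 0 else x + 1)).sum := by
      intro p
      rw [← ih fun b w => F (if (p : ℕ) = 0 then b else !b)
          ((p : ℕ) :: w.map fun x => if x + 1 = (p : ℕ) then 0 else x + 1)]
      refine Finset.sum_congr rfl fun e _ => ?_
      congr 1
      · rw [Equiv.Perm.decomposeFin.symm_sign]
        rcases Int.units_eq_one_or (Equiv.Perm.sign e) with h | h <;>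
          by_cases hp : p = 0 <;> simp [h, hp, Fin.val_eq_zero_iff]
      · rw [List.ofFn_succ, List.map_ofFn]
        congr 1
        · simp
        · congr 1
          funext i
          rw [Equiv.Perm.decomposeFin_symm_apply_succ, Equiv.swap_apply_def]
          by_cases hp : (e i).succ = p
          · have : (e i : ℕ) + 1 = p := by rw [← hp]; simp
            simp [hp, this]
          · have : (e i : ℕ) + 1 ≠ p := fun h => hp (Fin.ext (by simpa using h))
            simp [hp, this]
    simp only [step]
    rw [Fin.sum_univ_eq_sum_range fun p => ((signedWords n).map fun q =>
      F (if p = 0 then q.1 else !q.1) (p :: q.2.map fun x => if x + 1 = p then 0 else x + 1)).sum]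
    simp only [signedWords, List.flatMap_def, List.map_flatten, List.sum_flatten, List.map_map,
      Function.comp_def]
    rfl

/-- The number of `1234`-avoiders of length `n` with a given parity, as a computation on words. -/
theorem card_avoiders (n : ℕ) (b : Bool) :
    Nat.card {π : Equiv.Perm (Fin n) //
        decide (Equiv.Perm.sign π = 1) = b ∧ Pattern.Avoids p1234 π} =
      ((signedWords n).map fun q => if q.1 = b ∧ hasInc 4 0 q.2 = false then 1 else 0).sum := by
  classical
  rw [← sum_perm_eq n fun s w => if s = b ∧ hasInc 4 0 w = false then 1 else 0]
  rw [Nat.card_eq_fintype_card, Fintype.card_subtype, Finset.card_filter]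
  refine Finset.sum_congr rfl fun π _ => ?_
  simp only [Pattern.Avoids, contains_iff, Bool.not_eq_true]

theorem eav_six_1234 : eav 6 p1234 = 258 := by
  have h := card_avoiders 6 true
  simp only [decide_eq_true_eq] at h
  rw [eav, h]
  decide +kernel

/-- Complementing values turns `4321` into `1234`. -/
theorem contains_4321_iff {n : ℕ} (π : Equiv.Perm (Fin n)) :
    Pattern.Contains p4321 π ↔ Pattern.Contains p1234 (Fin.revPerm * π) := by
  have hp : ∀ a b, p4321 a < p4321 b ↔ p1234 b < p1234 a := by decide
  refine exists_congr fun f => and_congr_right fun _ => ?_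
  simp only [hp, Equiv.Perm.mul_apply, Fin.revPerm_apply, Fin.rev_lt_rev]
  exact forall_comm

theorem eav_six_4321 : eav 6 p4321 = 255 := by
  have hrev : Equiv.Perm.sign (Fin.revPerm : Equiv.Perm (Fin 6)) = -1 := by decide
  have h := card_avoiders 6 false
  have e : eav 6 p4321 = Nat.card {π : Equiv.Perm (Fin 6) //
      decide (Equiv.Perm.sign π = 1) = false ∧ Pattern.Avoids p1234 π} := by
    refine Nat.card_congr ((Equiv.mulLeft Fin.revPerm).subtypeEquiv fun π => ?_)
    refine and_congr ?_ (not_congr (contains_4321_iff π))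
    rw [Equiv.coe_mulLeft, Equiv.Perm.sign_mul, hrev]
    rcases Int.units_eq_one_or (Equiv.Perm.sign π) with h | h <;> simp [h]
  rw [e, h]
  decide +kernel

/-- `1234` and `4321` are not even-Wilf-equivalent: `eav_6(1234) = 258` while
`eav_6(4321) = 255`. -/
theorem stmt19 :
    ¬ EvenWilfEquiv p1234 p4321 ∧ eav 6 p1234 = 258 ∧ eav 6 p4321 = 255 := by
  refine ⟨fun h => ?_, eav_six_1234, eav_six_4321⟩
  have := h 6
  rw [eav_six_1234, eav_six_4321] at this
  omega
end
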